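/- Let p and q be distinct primes and m ∈ ℕ. Then K_1(C_{p^m} ⊕ C_q) = Σ_{k=1}^m 1/p^{k−1} + 1 = (p^m − 1)/(p^m − p^{m−1}) + 1. -/

import Mathlib

open Finset

/-- `S(I)` is minimal zero-sum: nonempty, zero-sum, and no proper nonempty
subfamily is zero-sum. -/
def IsMinZeroSum {G : Type*} [AddCommGroup G] {ℓ : ℕ} (g : Fin ℓ → G)
    (I : Finset (Fin ℓ)) : Prop :=
  I.Nonempty ∧ ∑ i ∈ I, g i = 0 ∧ ∀ J ⊂ I, J.Nonempty → ∑ i ∈ J, g i ≠ 0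

/-- `P` is an irreducible factorization of the indexed multiset `g`: a partition
of the index set all of whose parts are minimal zero-sum. -/
def IsFactorization {G : Type*} [AddCommGroup G] {ℓ : ℕ} (g : Fin ℓ → G)
    (P : Finpartition (Finset.univ : Finset (Fin ℓ))) : Prop :=
  ∀ I ∈ P.parts, IsMinZeroSum g I

/-- `g` is a unique factorization indexed multiset (UFIM) over `G∖{0}`:
all elements are nonzero and there is exactly one irreducible factorization. -/
def IsUFIM {G : Type*} [AddCommGroup G] {ℓ : ℕ} (g : Fin ℓ → G) : Prop :=
  (∀ i, g i ≠ 0) ∧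
  ∃! P : Finpartition (Finset.univ : Finset (Fin ℓ)), IsFactorization g P

/-- The cross number `k(S) = ∑ 1/ord(g_i)`. -/
noncomputable def crossNum {G : Type*} [AddCommGroup G] {ℓ : ℕ} (g : Fin ℓ → G) : ℝ :=
  ∑ i, (1 : ℝ) / (addOrderOf (g i) : ℝ)

/-- `K₁(G)`: the maximal cross number of a UFIM over `G∖{0}`. -/
noncomputable def K1 (G : Type*) [AddCommGroup G] : ℝ :=
  sSup {x : ℝ | ∃ (ℓ : ℕ) (g : Fin ℓ → G), IsUFIM g ∧ crossNum g = x}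

/-- `N₁(G)`: the maximal length of a UFIM over `G∖{0}`. -/
noncomputable def N1 (G : Type*) [AddCommGroup G] : ℕ :=
  sSup {n : ℕ | ∃ g : Fin n → G, IsUFIM g}

/-- `K(G)`: the maximal cross number of a minimal zero-sum indexed multiset over `G∖{0}`. -/
noncomputable def Kcross (G : Type*) [AddCommGroup G] : ℝ :=
  sSup {x : ℝ | ∃ (ℓ : ℕ) (g : Fin ℓ → G), (∀ i, g i ≠ 0) ∧
    IsMinZeroSum g Finset.univ ∧ crossNum g = x}

/-- `g` is zero-sum free: no nonempty subfamily is zero-sum. -/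
def IsZeroSumFree {G : Type*} [AddCommGroup G] {ℓ : ℕ} (g : Fin ℓ → G) : Prop :=
  ∀ I : Finset (Fin ℓ), I.Nonempty → ∑ i ∈ I, g i ≠ 0

/-- The little cross number `k(G)`: the maximal cross number of a zero-sum free
indexed multiset over `G∖{0}`. -/
noncomputable def littleCross (G : Type*) [AddCommGroup G] : ℝ :=
  sSup {x : ℝ | ∃ (ℓ : ℕ) (g : Fin ℓ → G), (∀ i, g i ≠ 0) ∧
    IsZeroSumFree g ∧ crossNum g = x}

/-!
A zero-sum family of nonzero elements is a UFIM if and only if its zero-sum subfamilies are closed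
under intersection. Let `π` be a homomorphism with image of prime order `r`. Replacing at most `r`
elements outside `ker π` by their sum, when this sum is a nonzero element of `ker π`, preserves the
UFIM property and does not lower a weight that is at most `c` outside `ker π` and at least `r * c`
on it. Once no such merging is possible, the zero-sum subfamilies outside `ker π` are exactly those
whose image under `π` is zero-sum, and the Cauchy-Davenport theorem shows that at most `r` elements
lie outside `ker π`.

For the weight `1 / ord` and multiplication by `p ^ k` this bounds the cross number over a cyclic
group of order `p ^ (k + 1)` by that over its subgroup of order `p ^ k` plus `1 / p ^ k`. In a
cyclic group of order `p ^ m * q` the weights of the elements of order divisible by `q` spread over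
`1 / (p ^ j * q)` for `j ≤ m`, so merging is applied instead to the weights capped at
`1 / (p ^ j * q)`, relaxing the cap from `j = m` down to `j = 0`: each relaxation costs at most
`1 / p ^ j - 1 / p ^ (j + 1)`. The bound is attained by adding `p` elements of order `p ^ k`
for each `1 ≤ k ≤ m` and `q` elements of order `q`.
-/

/-- The family `f` restricted to the index set `s` is a UFIM, in a form suited to induction: instead
of uniqueness of the factorization we ask that zero-sum subfamilies be closed under intersection,
see `isUFIM_iff_isUFIMOn_univ`. -/
structure IsUFIMOn {ι G : Type*} [DecidableEq ι] [AddCommGroup G] (s : Finset ι) (f : ι → G) :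
    Prop where
  ne_zero : ∀ i ∈ s, f i ≠ 0
  sum_eq_zero : ∑ i ∈ s, f i = 0
  sum_inter_eq_zero : ∀ I ⊆ s, ∀ J ⊆ s, ∑ i ∈ I, f i = 0 → ∑ i ∈ J, f i = 0 →
    ∑ i ∈ I ∩ J, f i = 0

/-- The set of cross numbers of UFIMs over `G`, whose supremum is `K1 G`. -/
def crossNumSet (G : Type*) [AddCommGroup G] : Set ℝ :=
  {x | ∃ (ℓ : ℕ) (g : Fin ℓ → G), IsUFIM g ∧ crossNum g = x}

section Factorization

variable {G : Type*} [AddCommGroup G] {ℓ : ℕ} {g : Fin ℓ → G}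

lemma sum_sdiff_eq_zero {ι : Type*} [DecidableEq ι] {f : ι → G} {I J : Finset ι} (hJI : J ⊆ I)
    (hI : ∑ i ∈ I, f i = 0) (hJ : ∑ i ∈ J, f i = 0) : ∑ i ∈ I \ J, f i = 0 := by
  rw [sum_sdiff_eq_sub hJI, hI, hJ, sub_zero]

lemma exists_isMinZeroSum_subset {I : Finset (Fin ℓ)} (hI : I.Nonempty)
    (hsum : ∑ i ∈ I, g i = 0) : ∃ J ⊆ I, IsMinZeroSum g J := by
  obtain ⟨J, hJI, hJ⟩ := exists_minimal_le_of_wellFoundedLT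
    (fun J : Finset (Fin ℓ) => J.Nonempty ∧ ∑ i ∈ J, g i = 0) I ⟨hI, hsum⟩
  exact ⟨J, hJI, hJ.prop.1, hJ.prop.2, fun K hK hne h0 => hJ.not_prop_of_lt hK ⟨hne, h0⟩⟩

lemma IsMinZeroSum.subset_of_sum_inter_eq_zero {I J : Finset (Fin ℓ)} (hI : IsMinZeroSum g I)
    (hne : (I ∩ J).Nonempty) (hsum : ∑ i ∈ I ∩ J, g i = 0) : I ⊆ J := by
  by_contra hIJ
  have hlt : I ∩ J ⊂ I := inter_subset_left.ssubset_of_ne fun h => hIJ (inter_eq_left.1 h)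
  exact hI.2.2 _ hlt hne hsum

lemma exists_finpartition_forall_isMinZeroSum (I : Finset (Fin ℓ)) (hI : ∑ i ∈ I, g i = 0) :
    ∃ P : Finpartition I, ∀ J ∈ P.parts, IsMinZeroSum g J := by
  induction I using Finset.strongInduction with
  | H I ih =>
    obtain rfl | hne := I.eq_empty_or_nonempty
    · exact ⟨Finpartition.empty _, by simp⟩
    obtain ⟨J, hJI, hJ⟩ := exists_isMinZeroSum_subset hne hI
    obtain ⟨P, hP⟩ := ih (I \ J) (sdiff_ssubset hJI hJ.1) (sum_sdiff_eq_zero hJI hI hJ.2.1)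
    refine ⟨P.extend hJ.1.ne_empty sdiff_disjoint (sdiff_union_of_subset hJI), ?_⟩
    simpa [Finpartition.extend] using And.intro hJ hP

lemma IsFactorization.sum_eq_zero {P : Finpartition (univ : Finset (Fin ℓ))}
    (hP : IsFactorization g P) : ∑ i, g i = 0 := by
  rw [← P.biUnion_parts, sum_biUnion P.disjoint]
  exact Finset.sum_eq_zero fun I hI => (hP I hI).2.1

lemma IsMinZeroSum.mem_parts {P : Finpartition (univ : Finset (Fin ℓ))}
    (hP : IsFactorization g P) (huniq : ∀ Q, IsFactorization g Q → Q = P)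
    {J : Finset (Fin ℓ)} (hJ : IsMinZeroSum g J) : J ∈ P.parts := by
  obtain ⟨Q, hQ⟩ := exists_finpartition_forall_isMinZeroSum (univ \ J)
    (sum_sdiff_eq_zero (subset_univ J) hP.sum_eq_zero hJ.2.1)
  rw [← huniq (Q.extend hJ.1.ne_empty sdiff_disjoint (sdiff_union_of_subset (subset_univ J)))
    (by simpa [IsFactorization, Finpartition.extend] using And.intro hJ hQ)]
  exact mem_insert_self _ _

lemma IsUFIM.isUFIMOn_univ (hg : IsUFIM g) : IsUFIMOn univ g := by
  obtain ⟨h0, P, hP, huniq⟩ := hg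
  refine ⟨fun i _ => h0 i, hP.sum_eq_zero, fun I _ J _ hI hJ => ?_⟩
  obtain ⟨Q, hQ⟩ := exists_finpartition_forall_isMinZeroSum I hI
  obtain ⟨R, hR⟩ := exists_finpartition_forall_isMinZeroSum J hJ
  have hQP : Q.parts ⊆ P.parts := fun K hK => (hQ K hK).mem_parts hP huniq
  have hRP : R.parts ⊆ P.parts := fun K hK => (hR K hK).mem_parts hP huniq
  have hinter : I ∩ J = (Q.parts ∩ R.parts).biUnion id := by
    ext x
    simp only [mem_inter, mem_biUnion, id]
    constructor
    · rintro ⟨hxI, hxJ⟩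
      obtain ⟨K, hK, hxK⟩ := Q.exists_mem hxI
      obtain ⟨K', hK', hxK'⟩ := R.exists_mem hxJ
      obtain rfl := P.eq_of_mem_parts (hQP hK) (hRP hK') hxK hxK'
      exact ⟨K, ⟨hK, hK'⟩, hxK⟩
    · rintro ⟨K, ⟨hKQ, hKR⟩, hx⟩
      exact ⟨Q.le hKQ hx, R.le hKR hx⟩
  rw [hinter, sum_biUnion (P.disjoint.subset fun K hK => hQP (mem_inter.1 hK).1)]
  exact Finset.sum_eq_zero fun K hK => (hQ K (mem_inter.1 hK).1).2.1

lemma IsUFIMOn.parts_subset (hg : IsUFIMOn univ g) {P Q : Finpartition (univ : Finset (Fin ℓ))}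
    (hP : IsFactorization g P) (hQ : IsFactorization g Q) : P.parts ⊆ Q.parts := by
  intro I hI
  obtain ⟨i, hi⟩ := (hP I hI).1
  obtain ⟨J, hJ, hiJ⟩ := Q.exists_mem (mem_univ i)
  have hsum := hg.sum_inter_eq_zero I (subset_univ I) J (subset_univ J) (hP I hI).2.1 (hQ J hJ).2.1
  have hne : (I ∩ J).Nonempty := ⟨i, mem_inter.2 ⟨hi, hiJ⟩⟩
  have hIJ : I ⊆ J := (hP I hI).subset_of_sum_inter_eq_zero hne hsum
  have hJI : J ⊆ I :=
    (hQ J hJ).subset_of_sum_inter_eq_zero (inter_comm I J ▸ hne) (inter_comm I J ▸ hsum)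
  rwa [hIJ.antisymm hJI]

theorem isUFIM_iff_isUFIMOn_univ : IsUFIM g ↔ IsUFIMOn univ g := by
  refine ⟨IsUFIM.isUFIMOn_univ, fun hg => ⟨fun i => hg.ne_zero i (mem_univ i), ?_⟩⟩
  obtain ⟨P, hP⟩ := exists_finpartition_forall_isMinZeroSum univ hg.sum_eq_zero
  exact ⟨P, hP, fun Q hQ =>
    Finpartition.ext ((hg.parts_subset hQ hP).antisymm (hg.parts_subset hP hQ))⟩

end Factorization

namespace IsUFIMOn

variable {ι κ G H : Type*} [DecidableEq ι] [DecidableEq κ] [AddCommGroup G] [AddCommGroup H]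
  {s U : Finset ι} {f : ι → G}

lemma empty (f : ι → G) : IsUFIMOn ∅ f where
  ne_zero := by simp
  sum_eq_zero := sum_empty
  sum_inter_eq_zero I hI J _ _ _ := by simp [subset_empty.1 hI]

lemma sdiff (hf : IsUFIMOn s f) (hU : U ⊆ s) (hsum : ∑ i ∈ U, f i = 0) :
    IsUFIMOn (s \ U) f where
  ne_zero i hi := hf.ne_zero i (sdiff_subset hi)
  sum_eq_zero := sum_sdiff_eq_zero hU hf.sum_eq_zero hsum
  sum_inter_eq_zero I hI J hJ :=
    hf.sum_inter_eq_zero I (hI.trans sdiff_subset) J (hJ.trans sdiff_subset)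

lemma comp_injOn {t : Finset κ} (hf : IsUFIMOn s f) (e : κ → ι) (he : Set.InjOn e t)
    (himg : t.image e = s) : IsUFIMOn t (f ∘ e) := by
  have hsum {I : Finset κ} (hI : I ⊆ t) : ∑ k ∈ I.image e, f k = ∑ k ∈ I, (f ∘ e) k :=
    sum_image (he.mono hI)
  have hsub {I : Finset κ} (hI : I ⊆ t) : I.image e ⊆ s := himg ▸ image_subset_image hI
  refine ⟨fun k hk => hf.ne_zero _ (himg ▸ mem_image_of_mem e hk), ?_, fun I hI J hJ hI0 hJ0 => ?_⟩
  · rw [← hsum subset_rfl, himg, hf.sum_eq_zero]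
  · rw [← hsum (inter_subset_left.trans hI), image_inter_of_injOn _ _ (he.mono (by simp [hI, hJ]))]
    exact hf.sum_inter_eq_zero _ (hsub hI) _ (hsub hJ) ((hsum hI).trans hI0) ((hsum hJ).trans hJ0)

lemma of_map (φ : G →+ H) (hφ : Function.Injective φ) {h : ι → H} (hh : IsUFIMOn s h)
    (hfh : ∀ i ∈ s, φ (f i) = h i) : IsUFIMOn s f := by
  have hsum {I : Finset ι} (hI : I ⊆ s) : ∑ i ∈ I, h i = 0 ↔ ∑ i ∈ I, f i = 0 := by
    rw [← map_eq_zero_iff φ hφ, map_sum, sum_congr rfl fun i hi => hfh i (hI hi)]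
  refine ⟨fun i hi h0 => hh.ne_zero i hi (by rw [← hfh i hi, h0, map_zero]),
    (hsum subset_rfl).1 hh.sum_eq_zero, fun I hI J hJ hI0 hJ0 => ?_⟩
  exact (hsum (inter_subset_left.trans hI)).1
    (hh.sum_inter_eq_zero I hI J hJ ((hsum hI).2 hI0) ((hsum hJ).2 hJ0))

lemma sum_mem_crossNumSet (hf : IsUFIMOn s f) :
    ∑ i ∈ s, (1 : ℝ) / addOrderOf (f i) ∈ crossNumSet G := by
  let e (k : Fin #s) : ι := s.equivFin.symm k
  have he : Function.Injective e := Subtype.val_injective.comp s.equivFin.symm.injective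
  have himg : univ.image e = s := by
    refine eq_of_subset_of_card_le (by simp [image_subset_iff, e]) ?_
    rw [card_image_of_injective _ he, card_univ, Fintype.card_fin]
  refine ⟨#s, f ∘ e, isUFIM_iff_isUFIMOn_univ.2 (hf.comp_injOn e he.injOn (by simpa using himg)),
    ?_⟩
  conv_rhs => rw [← himg, sum_image he.injOn]
  rfl

-- Zero-sum subfamilies of the fibre sums pull back along `φ`, and preimages commute with `∩`.
lemma fiberwise_sum (hf : IsUFIMOn s f) {t : Finset κ} (φ : ι → κ) (hφ : ∀ i ∈ s, φ i ∈ t)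
    (hne : ∀ k ∈ t, ∑ i ∈ s with φ i = k, f i ≠ 0) :
    IsUFIMOn t fun k => ∑ i ∈ s with φ i = k, f i where
  ne_zero := hne
  sum_eq_zero := (sum_fiberwise_of_maps_to hφ f).trans hf.sum_eq_zero
  sum_inter_eq_zero I _ J _ hI hJ := by
    rw [sum_fiberwise_eq_sum_filter] at hI hJ ⊢
    simp only [mem_inter, filter_and]
    exact hf.sum_inter_eq_zero _ (filter_subset _ _) _ (filter_subset _ _) hI hJ

lemma exists_merge (hf : IsUFIMOn s f) {B : Finset ι} (hB : B ⊆ s) (hsum : ∑ i ∈ B, f i ≠ 0) :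
    ∃ (t : Finset ι) (g : ι → G), IsUFIMOn t g ∧ #t = #s - #B + 1 ∧
      ∀ w : G → ℝ, ∑ i ∈ t, w (g i) = ∑ i ∈ s \ B, w (f i) + w (∑ i ∈ B, f i) := by
  obtain ⟨b, hb⟩ : B.Nonempty := nonempty_of_sum_ne_zero hsum
  have hbs : b ∉ s \ B := fun h => (mem_sdiff.1 h).2 hb
  let φ (i : ι) : ι := if i ∈ B then b else i
  have hfib_merged : {i ∈ s | φ i = b} = B := by grind
  have hfib_other {k : ι} (hk : k ∈ s \ B) : {i ∈ s | φ i = k} = {k} := by grind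
  have hother {k : ι} (hk : k ∈ s \ B) : ∑ i ∈ s with φ i = k, f i = f k := by
    rw [hfib_other hk, sum_singleton]
  refine ⟨insert b (s \ B), fun k => ∑ i ∈ s with φ i = k, f i,
    hf.fiberwise_sum φ (by grind) fun k hk => ?_, ?_, fun w => ?_⟩
  · obtain rfl | hk := mem_insert.1 hk
    · rwa [hfib_merged]
    · exact hother hk ▸ hf.ne_zero k (mem_sdiff.1 hk).1
  · rw [card_insert_of_notMem hbs, card_sdiff_of_subset hB]
  · simp only [sum_insert hbs, hfib_merged]
    rw [add_comm, sum_congr rfl fun k hk => congrArg w (hother hk)]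

end IsUFIMOn

section CauchyDavenport

open scoped Pointwise

variable {ι H : Type*} [AddCommGroup H] {h : ι → H} {V : Finset ι}

lemma image_sum_powerset_insert [DecidableEq ι] [DecidableEq H] {a : ι} (ha : a ∉ V) :
    ((insert a V).powerset.image fun I => ∑ i ∈ I, h i) =
      (V.powerset.image fun I => ∑ i ∈ I, h i) + {0, h a} := by
  rw [powerset_insert, image_union, insert_eq 0, add_union, singleton_zero, add_zero,
    add_singleton, ← image_vadd, image_image, image_image]
  refine congrArg (_ ∪ ·) (image_congr fun I hI => ?_)
  simp [sum_insert (notMem_mono (mem_powerset.1 hI) ha), add_comm]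

lemma min_minOrder_le_card_image_sum_powerset [DecidableEq H] (hh : ∀ i ∈ V, h i ≠ 0) :
    min (AddMonoid.minOrder H) ↑(#V + 1) ≤ #(V.powerset.image fun I => ∑ i ∈ I, h i) := by
  classical
  induction V using Finset.induction_on with
  | empty => simp
  | insert a V ha ih =>
    have hcd := cauchy_davenport_minOrder_add (t := {0, h a})
      ((powerset_nonempty V).image fun I => ∑ i ∈ I, h i) (insert_nonempty _ _)
    rw [card_pair (hh a (mem_insert_self a V)).symm] at hcd
    rw [image_sum_powerset_insert ha, card_insert_of_notMem ha]
    refine le_trans (le_min (min_le_left _ _) ?_) hcd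
    obtain hle | hle := min_le_iff.1 (ih fun i hi => hh i (mem_insert_of_mem hi))
    · exact min_le_of_left_le (hle.trans (by exact_mod_cast Nat.le_succ _))
    · exact min_le_of_right_le (by exact_mod_cast Nat.succ_le_succ (Nat.cast_le.1 hle))

lemma natCard_le_minOrder (hH : (Nat.card H).Prime) : (Nat.card H : ℕ∞) ≤ AddMonoid.minOrder H := by
  refine AddMonoid.le_minOrder.2 fun a ha _ => ?_
  have hdvd : addOrderOf a ∣ Nat.card H := addOrderOf_dvd_natCard a
  have hne : addOrderOf a ≠ 1 := mt AddMonoid.addOrderOf_eq_one_iff.1 ha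
  exact_mod_cast ((hH.eq_one_or_self_of_dvd _ hdvd).resolve_left hne).ge

theorem exists_subset_sum_eq (hH : (Nat.card H).Prime) (hh : ∀ i ∈ V, h i ≠ 0)
    (hV : Nat.card H ≤ #V + 1) (y : H) : ∃ I ⊆ V, ∑ i ∈ I, h i = y := by
  classical
  have := Nat.finite_of_card_ne_zero hH.ne_zero
  have := Fintype.ofFinite H
  have hcard : Nat.card H ≤ #(V.powerset.image fun I => ∑ i ∈ I, h i) := by
    have hle := (le_min (natCard_le_minOrder hH) (by exact_mod_cast hV)).trans
      (min_minOrder_le_card_image_sum_powerset hh)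
    exact_mod_cast hle
  have huniv : (V.powerset.image fun I => ∑ i ∈ I, h i) = univ :=
    eq_univ_of_card _ ((card_le_univ _).antisymm (Nat.card_eq_fintype_card (α := H) ▸ hcard))
  simpa using eq_univ_iff_forall.1 huniv y

end CauchyDavenport

section Hom

variable {ι G H : Type*} [AddCommGroup G] [AddCommGroup H] {π : G →+ H} {s U : Finset ι} {f : ι → G}

lemma exists_subset_mem_map_sum_eq_zero (hr : (Nat.card π.range).Prime)
    (hU : ∀ i ∈ U, π (f i) ≠ 0) (hcard : Nat.card π.range ≤ #U) {u : ι} (hu : u ∈ U) :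
    ∃ I ⊆ U, u ∈ I ∧ π (∑ i ∈ I, f i) = 0 := by
  classical
  obtain ⟨I, hI, hsum⟩ := exists_subset_sum_eq hr (h := fun i => π.rangeRestrict (f i))
    (V := U.erase u) (fun i hi h0 => hU i (mem_of_mem_erase hi) (congrArg Subtype.val h0))
    (by rwa [card_erase_add_one hu]) (-π.rangeRestrict (f u))
  have huI : u ∉ I := fun h => notMem_erase u U (hI h)
  refine ⟨insert u I, insert_subset hu (hI.trans (erase_subset u U)), mem_insert_self u I, ?_⟩
  rw [← π.coe_rangeRestrict, sum_insert huI, map_add, map_sum, hsum, add_neg_cancel,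
    AddSubgroup.coe_zero]

lemma sum_eq_zero_of_forall_card_le (hr : (Nat.card π.range).Prime) (hU : ∀ i ∈ U, π (f i) ≠ 0)
    (hsmall : ∀ B ⊆ U, #B ≤ Nat.card π.range → π (∑ i ∈ B, f i) = 0 → ∑ i ∈ B, f i = 0)
    (hsum : π (∑ i ∈ U, f i) = 0) : ∑ i ∈ U, f i = 0 := by
  classical
  induction U using Finset.strongInduction with
  | H U ih =>
    obtain hle | hlt := le_or_gt #U (Nat.card π.range)
    · exact hsmall U subset_rfl hle hsum
    obtain ⟨W, hWU, hW⟩ := exists_subset_card_eq hlt.le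
    obtain ⟨u, hu⟩ : W.Nonempty := card_pos.1 (hW ▸ hr.pos)
    obtain ⟨I, hIW, huI, hI⟩ :=
      exists_subset_mem_map_sum_eq_zero hr (fun i hi => hU i (hWU hi)) hW.ge hu
    have hIU : I ⊆ U := hIW.trans hWU
    have hI0 : ∑ i ∈ I, f i = 0 := hsmall I hIU (hW ▸ card_le_card hIW) hI
    have hsdiff : ∑ i ∈ U \ I, f i = ∑ i ∈ U, f i := by
      rw [sum_sdiff_eq_sub hIU, hI0, sub_zero]
    rw [← hsdiff] at hsum ⊢
    exact ih (U \ I) (sdiff_ssubset hIU ⟨u, huI⟩) (fun i hi => hU i (sdiff_subset hi))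
      (fun B hB => hsmall B (hB.trans sdiff_subset)) hsum

namespace IsUFIMOn

variable [DecidableEq ι]

-- Were `#U` larger, a minimal zero-sum `I ⊆ U` through `u` would still contain some `v ≠ u`, and
-- intersecting it with a zero-sum subset of `U.erase v` through `u` would make it smaller.
lemma card_le_natCard_range (hf : IsUFIMOn s f) (hr : (Nat.card π.range).Prime) (hUs : U ⊆ s)
    (hU : ∀ i ∈ U, π (f i) ≠ 0) (hzero : ∀ I ⊆ U, π (∑ i ∈ I, f i) = 0 → ∑ i ∈ I, f i = 0) :
    #U ≤ Nat.card π.range := by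
  by_contra! hlt
  obtain ⟨u, hu⟩ : U.Nonempty := card_pos.1 (hr.pos.trans hlt)
  have hexists {V : Finset ι} (hV : V ⊆ U) (hcard : Nat.card π.range ≤ #V) (huV : u ∈ V) :
      ∃ I ⊆ V, u ∈ I ∧ ∑ i ∈ I, f i = 0 := by
    obtain ⟨I, hI, huI, hsum⟩ :=
      exists_subset_mem_map_sum_eq_zero hr (fun i hi => hU i (hV hi)) hcard huV
    exact ⟨I, hI, huI, hzero I (hI.trans hV) hsum⟩
  obtain ⟨I₀, hI₀⟩ := hexists subset_rfl hlt.le hu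
  obtain ⟨I, -, hmin⟩ := exists_minimal_le_of_wellFoundedLT
    (fun I => I ⊆ U ∧ u ∈ I ∧ ∑ i ∈ I, f i = 0) I₀ hI₀
  obtain ⟨hIU, huI, hI⟩ := hmin.prop
  obtain ⟨v, hvI, hvu⟩ : ∃ v ∈ I, v ≠ u := by
    by_contra! hsub
    rw [eq_singleton_iff_unique_mem.2 ⟨huI, hsub⟩, sum_singleton] at hI
    exact hf.ne_zero u (hUs hu) hI
  obtain ⟨J, hJ, huJ, hJ0⟩ := hexists (erase_subset v U)
    (by rw [card_erase_of_mem (hIU hvI)]; exact Nat.le_sub_one_of_lt hlt)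
    (mem_erase.2 ⟨hvu.symm, hu⟩)
  have hsmaller : I ∩ J < I := inter_subset_left.ssubset_of_ne fun h =>
    notMem_erase v U (hJ (inter_eq_left.1 h hvI))
  exact hmin.not_prop_of_lt hsmaller
    ⟨hsmaller.le.trans hIU, mem_inter.2 ⟨huI, huJ⟩, hf.sum_inter_eq_zero I (hIU.trans hUs) J
      ((hJ.trans (erase_subset v U)).trans hUs) hI hJ0⟩

lemma exists_forall_sum_eq_zero (hf : IsUFIMOn s f) {L : AddSubgroup G} {w : G → ℝ} {r : ℕ} {c : ℝ}
    (hc : 0 ≤ c) (hout : ∀ x ∈ L, π x ≠ 0 → w x ≤ c) (hker : ∀ x ∈ L, π x = 0 → r * c ≤ w x) :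
    ∃ (t : Finset ι) (g : ι → G), IsUFIMOn t g ∧ ∑ i ∈ s, w (f i) ≤ ∑ i ∈ t, w (g i) ∧
      ∀ B ⊆ t, #B ≤ r → (∀ i ∈ B, g i ∈ L ∧ π (g i) ≠ 0) → π (∑ i ∈ B, g i) = 0 →
        ∑ i ∈ B, g i = 0 := by
  induction hn : #s using Nat.strong_induction_on generalizing s f with
  | _ n ih =>
    by_cases hdone : ∀ B ⊆ s, #B ≤ r → (∀ i ∈ B, f i ∈ L ∧ π (f i) ≠ 0) →
        π (∑ i ∈ B, f i) = 0 → ∑ i ∈ B, f i = 0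
    · exact ⟨s, f, hf, le_rfl, hdone⟩
    push Not at hdone
    obtain ⟨B, hBs, hBr, hB, hπ, hsum⟩ := hdone
    obtain ⟨t, g, hg, hcard, hw⟩ := hf.exists_merge hBs hsum
    have hB2 : 1 < #B := by
      obtain ⟨b, rfl⟩ | hB2 := (nonempty_of_sum_ne_zero hsum).exists_eq_singleton_or_nontrivial
      · exact absurd (sum_singleton f b ▸ hπ) (hB b (mem_singleton_self b)).2
      · exact one_lt_card_iff_nontrivial.2 hB2
    have hwB : ∑ i ∈ B, w (f i) ≤ w (∑ i ∈ B, f i) := calc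
      ∑ i ∈ B, w (f i) ≤ #B * c := by
        simpa using sum_le_card_nsmul B _ c fun i hi => hout _ (hB i hi).1 (hB i hi).2
      _ ≤ r * c := by gcongr
      _ ≤ w (∑ i ∈ B, f i) := hker _ (L.sum_mem fun i hi => (hB i hi).1) hπ
    obtain ⟨t', g', hg', hle, hdone⟩ := ih #t (by have := card_le_card hBs; omega) hg rfl
    refine ⟨t', g', hg', le_trans ?_ hle, hdone⟩
    rw [hw, ← sum_sdiff hBs]
    gcongr

lemma exists_forall_card_le_and_sum_eq_zero (hf : IsUFIMOn s f)
    (hr : (Nat.card π.range).Prime) {L : AddSubgroup G} {w : G → ℝ} {c : ℝ} (hc : 0 ≤ c)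
    (hout : ∀ x ∈ L, π x ≠ 0 → w x ≤ c)
    (hker : ∀ x ∈ L, π x = 0 → Nat.card π.range * c ≤ w x) :
    ∃ (t : Finset ι) (g : ι → G), IsUFIMOn t g ∧ ∑ i ∈ s, w (f i) ≤ ∑ i ∈ t, w (g i) ∧
      ∀ U ⊆ t, (∀ i ∈ U, g i ∈ L ∧ π (g i) ≠ 0) →
        #U ≤ Nat.card π.range ∧ (π (∑ i ∈ U, g i) = 0 → ∑ i ∈ U, g i = 0) := by
  obtain ⟨t, g, hg, hle, hmerged⟩ := hf.exists_forall_sum_eq_zero hc hout hker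
  have hzero {U : Finset ι} (hUt : U ⊆ t) (hU : ∀ i ∈ U, g i ∈ L ∧ π (g i) ≠ 0) :
      π (∑ i ∈ U, g i) = 0 → ∑ i ∈ U, g i = 0 :=
    sum_eq_zero_of_forall_card_le hr (fun i hi => (hU i hi).2) fun B hB hBr =>
      hmerged B (hB.trans hUt) hBr fun i hi => hU i (hB hi)
  exact ⟨t, g, hg, hle, fun U hUt hU => ⟨hg.card_le_natCard_range hr hUt (fun i hi => (hU i hi).2)
    fun I hI => hzero (hI.trans hUt) fun i hi => hU i (hI hi), hzero hUt hU⟩⟩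

lemma exists_isUFIMOn_ker (hf : IsUFIMOn s f) (hr : (Nat.card π.range).Prime) {w : G → ℝ} {c : ℝ}
    (hc : 0 ≤ c) (hout : ∀ x, π x ≠ 0 → w x ≤ c)
    (hker : ∀ x, π x = 0 → Nat.card π.range * c ≤ w x) :
    ∃ (t : Finset ι) (g : ι → π.ker), IsUFIMOn t g ∧
      ∑ i ∈ s, w (f i) ≤ ∑ i ∈ t, w (g i) + Nat.card π.range * c := by
  classical
  obtain ⟨t, g, hg, hle, hred⟩ := hf.exists_forall_card_le_and_sum_eq_zero (L := ⊤) hr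
    hc (fun x _ => hout x) fun x _ => hker x
  set U : Finset ι := {i ∈ t | π (g i) ≠ 0}
  obtain ⟨hcard, hzero⟩ := hred U (filter_subset _ t) fun i hi => ⟨trivial, (mem_filter.1 hi).2⟩
  have hU : ∑ i ∈ U, g i = 0 := by
    refine hzero ?_
    rw [map_sum, sum_filter_ne_zero, ← map_sum, hg.sum_eq_zero, map_zero]
  have hmem {i : ι} (hi : i ∈ t \ U) : π (g i) = 0 := by grind
  let g' (i : ι) : π.ker := if hi : π (g i) = 0 then ⟨g i, hi⟩ else 0
  have hg' {i : ι} (hi : i ∈ t \ U) : (g' i : G) = g i := by simp [g', hmem hi]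
  refine ⟨t \ U, g', of_map π.ker.subtype π.ker.subtype_injective
    (hg.sdiff (filter_subset _ t) hU) fun i => hg', ?_⟩
  calc ∑ i ∈ s, w (f i) ≤ ∑ i ∈ t, w (g i) := hle
    _ = ∑ i ∈ t \ U, w (g i) + ∑ i ∈ U, w (g i) := (sum_sdiff (filter_subset _ t)).symm
    _ = ∑ i ∈ t \ U, w (g' i) + ∑ i ∈ U, w (g i) := by
      rw [sum_congr rfl fun i hi => congrArg w (hg' hi)]
    _ ≤ ∑ i ∈ t \ U, w (g' i) + #U * c := by
      gcongr
      simpa using sum_le_card_nsmul U _ c fun i hi => hout _ (mem_filter.1 hi).2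
    _ ≤ ∑ i ∈ t \ U, w (g' i) + Nat.card π.range * c := by gcongr

end IsUFIMOn

end Hom

section NsmulOrder

variable {G : Type*} [AddCommGroup G] {x : G} {m n p q r : ℕ}

lemma one_div_le_one_div_addOrderOf (hn : n ≠ 0) (hx : n • x = 0) :
    (1 : ℝ) / n ≤ 1 / addOrderOf x := by
  have hdvd : addOrderOf x ∣ n := addOrderOf_dvd_of_nsmul_eq_zero hx
  have hpos : 0 < addOrderOf x := Nat.pos_of_dvd_of_pos hdvd (Nat.pos_of_ne_zero hn)
  exact one_div_le_one_div_of_le (by exact_mod_cast hpos)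
    (by exact_mod_cast Nat.le_of_dvd (Nat.pos_of_ne_zero hn) hdvd)

lemma addOrderOf_eq_of_natCard_eq_prime_pow_succ {k : ℕ} (hp : p.Prime)
    (hG : Nat.card G = p ^ (k + 1)) (hx : p ^ k • x ≠ 0) : addOrderOf x = p ^ (k + 1) :=
  haveI := Fact.mk hp
  addOrderOf_eq_prime_pow hx (hG ▸ card_nsmul_eq_zero')

lemma exists_addOrderOf_eq_pow_mul (hp : p.Prime) (hq : q.Prime) (hx : p ^ m • x ≠ 0)
    (hpq : (p ^ m * q) • x = 0) : ∃ i, addOrderOf x = p ^ i * q := by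
  obtain ⟨a, b, ha, hb, hab⟩ := Nat.dvd_mul.1 (addOrderOf_dvd_of_nsmul_eq_zero hpq)
  obtain ⟨i, -, rfl⟩ := (Nat.dvd_prime_pow hp).1 ha
  obtain rfl | rfl := hq.eq_one_or_self_of_dvd b hb
  · rw [mul_one] at hab
    exact absurd (addOrderOf_dvd_iff_nsmul_eq_zero.1 (hab ▸ ha)) hx
  · exact ⟨i, hab.symm⟩

lemma natCard_range_nsmul [IsAddCyclic G] [Finite G] (hG : Nat.card G = n * r) :
    Nat.card (nsmulAddMonoidHom n : G →+ G).range = r := by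
  have hn : 0 < n := Nat.pos_of_ne_zero (left_ne_zero_of_mul (hG ▸ Nat.card_pos.ne'))
  rw [IsAddCyclic.card_nsmulAddMonoidHom_range, hG, Nat.gcd_mul_right_left,
    Nat.mul_div_cancel_left r hn]

lemma natCard_ker_nsmul [IsAddCyclic G] [Finite G] (hG : Nat.card G = n * r) :
    Nat.card (nsmulAddMonoidHom n : G →+ G).ker = n := by
  rw [IsAddCyclic.card_nsmulAddMonoidHom_ker, hG, Nat.gcd_mul_right_left]

end NsmulOrder

section UpperBound

universe u

variable {ι : Type*} [DecidableEq ι] {m p q : ℕ}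

lemma IsUFIMOn.sum_one_div_addOrderOf_le_of_card_eq_prime_pow (hp : p.Prime) (k : ℕ)
    {G : Type u} [AddCommGroup G] [IsAddCyclic G] (hG : Nat.card G = p ^ k)
    {s : Finset ι} {f : ι → G} (hf : IsUFIMOn s f) :
    ∑ i ∈ s, (1 : ℝ) / addOrderOf (f i) ≤ ∑ j ∈ range k, (1 : ℝ) / p ^ j := by
  have hp0 := hp.pos
  induction k generalizing G s f with
  | zero =>
    have : Subsingleton G := (Nat.card_eq_one_iff_unique.1 hG).1
    have hs : s = ∅ := eq_empty_of_forall_notMem fun i hi => hf.ne_zero i hi (Subsingleton.elim _ _)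
    simp [hs]
  | succ k ih =>
    have := Nat.finite_of_card_ne_zero (α := G) (by rw [hG]; positivity)
    have hr : Nat.card (nsmulAddMonoidHom (p ^ k) : G →+ G).range = p := natCard_range_nsmul hG
    have hmul : (p : ℝ) * (1 / p ^ (k + 1)) = 1 / p ^ k := by rw [pow_succ']; field_simp
    obtain ⟨t, g, hg, hle⟩ := hf.exists_isUFIMOn_ker (π := nsmulAddMonoidHom (p ^ k))
      (w := fun x => 1 / addOrderOf x) (c := 1 / p ^ (k + 1)) (by rwa [hr]) (by positivity)
      (fun x hx => by
        rw [addOrderOf_eq_of_natCard_eq_prime_pow_succ hp hG hx, Nat.cast_pow])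
      (fun x hx => by
        rw [hr, hmul, ← Nat.cast_pow]
        exact one_div_le_one_div_addOrderOf (pow_ne_zero k hp.ne_zero) hx)
    simp only [AddSubgroup.addOrderOf_coe, hr, hmul] at hle
    rw [sum_range_succ]
    exact hle.trans (by gcongr; exact ih (natCard_ker_nsmul hG) hg)

open Classical in
/-- The weight `1 / ord x`, capped at `a` on the elements not killed by `n`. Lowering the cap `a`
one step at a time lets the merging argument treat the orders of these elements one by one. -/
noncomputable def cappedWeight {G : Type*} [AddCommGroup G] (n : ℕ) (a : ℝ) (x : G) : ℝ :=
  if n • x = 0 then 1 / addOrderOf x else min (1 / addOrderOf x) a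

variable {G : Type*} [AddCommGroup G] {n : ℕ} {a : ℝ} {x : G}

lemma cappedWeight_of_nsmul_eq_zero (hx : n • x = 0) : cappedWeight n a x = 1 / addOrderOf x :=
  if_pos hx

lemma cappedWeight_of_nsmul_ne_zero (hx : n • x ≠ 0) :
    cappedWeight n a x = min (1 / addOrderOf x : ℝ) a := if_neg hx

lemma cappedWeight_le (hx : n • x ≠ 0) : cappedWeight n a x ≤ a :=
  (cappedWeight_of_nsmul_ne_zero hx).trans_le (min_le_right _ _)

lemma one_div_le_cappedWeight {k : ℕ} (hnq : n.Coprime q) (hk : k ≠ 0) (hkq : (k * q) • x = 0)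
    (hx : n • x = 0) : (1 : ℝ) / k ≤ cappedWeight n a x := by
  have hdvd : addOrderOf x ∣ k :=
    (hnq.coprime_dvd_left (addOrderOf_dvd_of_nsmul_eq_zero hx)).dvd_of_dvd_mul_right
      (addOrderOf_dvd_of_nsmul_eq_zero hkq)
  rw [cappedWeight_of_nsmul_eq_zero hx]
  exact one_div_le_one_div_addOrderOf hk (addOrderOf_dvd_iff_nsmul_eq_zero.1 hdvd)

open Classical in
lemma cappedWeight_le_cappedWeight_succ_add (hp : p.Prime) (hq : q.Prime)
    (hx : (p ^ m * q) • x = 0) (j : ℕ) :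
    cappedWeight (p ^ m) (1 / (p ^ j * q)) x ≤ cappedWeight (p ^ m) (1 / (p ^ (j + 1) * q)) x +
      if (p ^ j * q) • x = 0 ∧ p ^ m • x ≠ 0 then 1 / (p ^ j * q : ℝ) - 1 / (p ^ (j + 1) * q)
      else 0 := by
  have hp0 : 0 < p := hp.pos
  have hq0 : 0 < q := hq.pos
  by_cases hm : p ^ m • x = 0
  · simp [hm, cappedWeight_of_nsmul_eq_zero]
  by_cases hj : (p ^ j * q) • x = 0
  · have hcap : (1 / (p ^ (j + 1) * q) : ℝ) ≤ 1 / addOrderOf x := by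
      have hj' : (p ^ (j + 1) * q) • x = 0 := by
        rw [pow_succ', mul_assoc, mul_nsmul', hj, nsmul_zero]
      exact_mod_cast one_div_le_one_div_addOrderOf (by positivity) hj'
    rw [if_pos ⟨hj, hm⟩, cappedWeight_of_nsmul_ne_zero (a := 1 / (p ^ (j + 1) * q)) hm,
      min_eq_right hcap, add_sub_cancel]
    exact cappedWeight_le hm
  · have hord : (1 / addOrderOf x : ℝ) ≤ 1 / (p ^ (j + 1) * q) := by
      obtain ⟨i, hi⟩ := exists_addOrderOf_eq_pow_mul hp hq hm hx
      have hji : j < i := by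
        by_contra! hij
        refine hj (addOrderOf_dvd_iff_nsmul_eq_zero.1 (hi ▸ ?_))
        exact mul_dvd_mul_right (pow_dvd_pow p hij) q
      have hle : p ^ (j + 1) * q ≤ addOrderOf x :=
        hi ▸ Nat.mul_le_mul_right q (Nat.pow_le_pow_right hp0 hji)
      exact one_div_le_one_div_of_le (by positivity) (by exact_mod_cast hle)
    rw [if_neg fun h => hj h.1, add_zero, cappedWeight_of_nsmul_ne_zero hm,
      cappedWeight_of_nsmul_ne_zero hm, min_eq_left hord]
    exact min_le_left _ _

namespace IsUFIMOn

variable [IsAddCyclic G] {s : Finset ι} {f : ι → G}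

lemma sum_cappedWeight_le_of_eq (hf : IsUFIMOn s f) (hp : p.Prime) (hq : q.Prime)
    (hG : Nat.card G = p ^ m * q) :
    ∑ i ∈ s, cappedWeight (p ^ m) (1 / (p ^ m * q)) (f i) ≤
      ∑ k ∈ range m, (1 : ℝ) / p ^ k + 1 / p ^ m := by
  have hp0 := hp.pos
  have hq0 := hq.pos
  have := Nat.finite_of_card_ne_zero (α := G) (by rw [hG]; positivity)
  have hr : Nat.card (nsmulAddMonoidHom (p ^ m) : G →+ G).range = q := natCard_range_nsmul hG
  have hmul : (q : ℝ) * (1 / (p ^ m * q)) = 1 / p ^ m := by field_simp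
  obtain ⟨t, g, hg, hle⟩ := hf.exists_isUFIMOn_ker (π := nsmulAddMonoidHom (p ^ m))
    (w := cappedWeight (p ^ m) (1 / (p ^ m * q))) (c := 1 / (p ^ m * q)) (by rwa [hr])
    (by positivity) (fun x => cappedWeight_le)
    (fun x hx => by
      rw [hr, hmul, cappedWeight_of_nsmul_eq_zero hx]
      exact_mod_cast one_div_le_one_div_addOrderOf (by positivity) hx)
  rw [hr, hmul] at hle
  refine hle.trans (add_le_add_left ?_ _)
  rw [sum_congr rfl fun i _ => cappedWeight_of_nsmul_eq_zero (g i).2]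
  simpa only [AddSubgroup.addOrderOf_coe] using
    hg.sum_one_div_addOrderOf_le_of_card_eq_prime_pow hp m (natCard_ker_nsmul hG)

lemma exists_sum_cappedWeight_le_succ (hf : IsUFIMOn s f) (hp : p.Prime) (hq : q.Prime)
    (hpq : p ≠ q) (hG : Nat.card G = p ^ m * q) (j : ℕ) :
    ∃ (t : Finset ι) (g : ι → G), IsUFIMOn t g ∧
      ∑ i ∈ s, cappedWeight (p ^ m) (1 / (p ^ j * q)) (f i) ≤
        ∑ i ∈ t, cappedWeight (p ^ m) (1 / (p ^ (j + 1) * q)) (g i) +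
          (1 / p ^ j - 1 / p ^ (j + 1)) := by
  classical
  have hp0 := hp.pos
  have hq0 := hq.pos
  have := Nat.finite_of_card_ne_zero (α := G) (by rw [hG]; positivity)
  have hr : Nat.card (nsmulAddMonoidHom (p ^ m) : G →+ G).range = q := natCard_range_nsmul hG
  have hcop : Nat.Coprime (p ^ m) q := ((Nat.coprime_primes hp hq).2 hpq).pow_left m
  have hmul : (q : ℝ) * (1 / (p ^ j * q)) = 1 / p ^ j := by field_simp
  obtain ⟨t, g, hg, hle, hred⟩ := hf.exists_forall_card_le_and_sum_eq_zero
    (π := nsmulAddMonoidHom (p ^ m)) (L := (nsmulAddMonoidHom (p ^ j * q) : G →+ G).ker)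
    (w := cappedWeight (p ^ m) (1 / (p ^ j * q))) (c := 1 / (p ^ j * q)) (by rwa [hr])
    (by positivity) (fun x _ => cappedWeight_le)
    (fun x hx hπ => by
      rw [hr, hmul]
      exact_mod_cast one_div_le_cappedWeight hcop (by positivity) hx hπ)
  refine ⟨t, g, hg, hle.trans ?_⟩
  set U : Finset ι := {i ∈ t | (p ^ j * q) • g i = 0 ∧ p ^ m • g i ≠ 0}
  have hU : #U ≤ q := hr ▸ (hred U (filter_subset _ t) fun i hi => (mem_filter.1 hi).2).1
  set d : ℝ := 1 / (p ^ j * q) - 1 / (p ^ (j + 1) * q) with hd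
  have hd0 : 0 ≤ d := by
    rw [hd, sub_nonneg]
    gcongr
    exacts [by exact_mod_cast hp0, j.le_succ]
  calc ∑ i ∈ t, cappedWeight (p ^ m) (1 / (p ^ j * q)) (g i)
      ≤ ∑ i ∈ t, (cappedWeight (p ^ m) (1 / (p ^ (j + 1) * q)) (g i) +
          if (p ^ j * q) • g i = 0 ∧ p ^ m • g i ≠ 0 then d else 0) :=
        sum_le_sum fun i _ => cappedWeight_le_cappedWeight_succ_add hp hq
          (hG ▸ card_nsmul_eq_zero') j
    _ = ∑ i ∈ t, cappedWeight (p ^ m) (1 / (p ^ (j + 1) * q)) (g i) + #U * d := by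
      rw [sum_add_distrib, ← sum_filter, sum_const, nsmul_eq_mul]
    _ ≤ ∑ i ∈ t, cappedWeight (p ^ m) (1 / (p ^ (j + 1) * q)) (g i) + q * d := by gcongr
    _ = ∑ i ∈ t, cappedWeight (p ^ m) (1 / (p ^ (j + 1) * q)) (g i) +
          (1 / p ^ j - 1 / p ^ (j + 1)) := by
      rw [hd]
      field_simp

lemma sum_cappedWeight_le (hf : IsUFIMOn s f) (hp : p.Prime) (hq : q.Prime) (hpq : p ≠ q)
    (hG : Nat.card G = p ^ m * q) {j : ℕ} (hj : j ≤ m) :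
    ∑ i ∈ s, cappedWeight (p ^ m) (1 / (p ^ j * q)) (f i) ≤
      ∑ k ∈ range m, (1 : ℝ) / p ^ k + 1 / p ^ j := by
  induction hj using Nat.decreasingInduction generalizing s f with
  | self => exact hf.sum_cappedWeight_le_of_eq hp hq hG
  | of_succ j _ ih =>
    obtain ⟨t, g, hg, hle⟩ := hf.exists_sum_cappedWeight_le_succ hp hq hpq hG j
    linarith [ih hg]

theorem sum_one_div_addOrderOf_le (hf : IsUFIMOn s f) (hp : p.Prime) (hq : q.Prime) (hpq : p ≠ q)
    (hG : Nat.card G = p ^ m * q) :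
    ∑ i ∈ s, (1 : ℝ) / addOrderOf (f i) ≤ ∑ k ∈ range m, (1 : ℝ) / p ^ k + 1 := by
  have hcap (x : G) : cappedWeight (p ^ m) (1 / (p ^ 0 * q)) x = 1 / addOrderOf x := by
    by_cases hx : p ^ m • x = 0
    · exact cappedWeight_of_nsmul_eq_zero hx
    obtain ⟨i, hi⟩ := exists_addOrderOf_eq_pow_mul hp hq hx (hG ▸ card_nsmul_eq_zero')
    have hle : q ≤ addOrderOf x := hi ▸ Nat.le_mul_of_pos_left q (pow_pos hp.pos i)
    rw [cappedWeight_of_nsmul_ne_zero hx, pow_zero, one_mul, min_eq_left]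
    exact one_div_le_one_div_of_le (by exact_mod_cast hq.pos) (by exact_mod_cast hle)
  have hle := hf.sum_cappedWeight_le hp hq hpq hG m.zero_le
  simp only [hcap] at hle
  rwa [pow_zero, div_one] at hle

end IsUFIMOn

end UpperBound

section LowerBound

variable {ι κ G H : Type*} [DecidableEq ι] [AddCommGroup G] [AddCommGroup H]

namespace IsUFIMOn

variable {s : Finset ι} {f : ι → G}

lemma of_forall_eq_empty_or_eq (hne : ∀ i ∈ s, f i ≠ 0) (hsum : ∑ i ∈ s, f i = 0)
    (hmin : ∀ I ⊆ s, ∑ i ∈ I, f i = 0 → I = ∅ ∨ I = s) : IsUFIMOn s f where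
  ne_zero := hne
  sum_eq_zero := hsum
  sum_inter_eq_zero I hI J hJ hI0 hJ0 := by
    obtain rfl | rfl := hmin I hI hI0
    · simp
    · rwa [inter_eq_right.2 hJ]

lemma disjSum [DecidableEq κ] {N : AddSubgroup G} {g : ι → N} {b : κ → G} {t : Finset κ}
    (hg : IsUFIMOn s g) (hb : IsUFIMOn t b)
    (hN : ∀ J ⊆ t, ∑ k ∈ J, b k ∈ N → ∑ k ∈ J, b k = 0) :
    IsUFIMOn (s.disjSum t) (Sum.elim (fun i => (g i : G)) b) := by
  have hsum (I : Finset (ι ⊕ κ)) : ∑ i ∈ I, Sum.elim (fun i => (g i : G)) b i =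
      (∑ i ∈ I.toLeft, g i : N) + ∑ k ∈ I.toRight, b k := by
    rw [sum_sum_eq_sum_toLeft_add_sum_toRight, AddSubgroup.val_finsetSum]
    rfl
  have hsplit {I : Finset (ι ⊕ κ)} (hI : I ⊆ s.disjSum t)
      (h0 : ∑ i ∈ I, Sum.elim (fun i => (g i : G)) b i = 0) :
      ∑ i ∈ I.toLeft, g i = 0 ∧ ∑ k ∈ I.toRight, b k = 0 := by
    rw [hsum, add_eq_zero_iff_neg_eq] at h0
    have hright := hN _ (subset_disjSum.1 hI).2 (h0 ▸ N.neg_mem (SetLike.coe_mem _))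
    rw [hright, neg_eq_zero] at h0
    exact ⟨Subtype.val_injective h0, hright⟩
  refine ⟨?_, by simp [hsum, hg.sum_eq_zero, hb.sum_eq_zero], fun I hI J hJ hI0 hJ0 => ?_⟩
  · rintro (i | k) hi
    · exact fun h0 => hg.ne_zero i (inl_mem_disjSum.1 hi) (Subtype.val_injective h0)
    · exact hb.ne_zero k (inr_mem_disjSum.1 hi)
  · rw [hsum, toLeft_inter, toRight_inter,
      hg.sum_inter_eq_zero _ (subset_disjSum.1 hI).1 _ (subset_disjSum.1 hJ).1 (hsplit hI hI0).1
        (hsplit hJ hJ0).1,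
      hb.sum_inter_eq_zero _ (subset_disjSum.1 hI).2 _ (subset_disjSum.1 hJ).2 (hsplit hI hI0).2
        (hsplit hJ hJ0).2]
    simp

end IsUFIMOn

/-- `r` copies of `g` when restricted to `range r`, except that the one at index `0` is shifted by
`-r • g` to make the sum zero. -/
def zeroSumBlock (r : ℕ) (g : G) (k : ℕ) : G := if k = 0 then g - r • g else g

lemma sum_zeroSumBlock {r : ℕ} (hr : 0 < r) (g : G) : ∑ k ∈ range r, zeroSumBlock r g k = 0 := by
  obtain ⟨n, rfl⟩ := Nat.exists_eq_succ_of_ne_zero hr.ne'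
  simp [sum_range_succ', zeroSumBlock, succ_nsmul]

variable {π : G →+ H} {g : G}

lemma natCard_range_nsmul_map_eq_zero (π : G →+ H) (g : G) : Nat.card π.range • π g = 0 :=
  congrArg Subtype.val (card_nsmul_eq_zero' (x := π.rangeRestrict g))

lemma map_zeroSumBlock (k : ℕ) : π (zeroSumBlock (Nat.card π.range) g k) = π g := by
  unfold zeroSumBlock
  split_ifs
  · rw [map_sub, map_nsmul, natCard_range_nsmul_map_eq_zero, sub_zero]
  · rfl

lemma eq_empty_or_eq_range_of_map_sum_zeroSumBlock (hr : (Nat.card π.range).Prime) (hg : π g ≠ 0)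
    {J : Finset ℕ} (hJ : J ⊆ range (Nat.card π.range))
    (h0 : π (∑ k ∈ J, zeroSumBlock (Nat.card π.range) g k) = 0) :
    J = ∅ ∨ J = range (Nat.card π.range) := by
  have := Fact.mk hr
  simp only [map_sum, map_zeroSumBlock, sum_const] at h0
  have hdvd : Nat.card π.range ∣ #J := by
    rw [← addOrderOf_eq_prime (natCard_range_nsmul_map_eq_zero π g) hg]
    exact addOrderOf_dvd_of_nsmul_eq_zero h0
  obtain hJ0 | hpos := (#J).eq_zero_or_pos
  · exact .inl (card_eq_zero.1 hJ0)
  · exact .inr (eq_of_subset_of_card_le hJ (by simpa using Nat.le_of_dvd hpos hdvd))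

lemma zero_mem_crossNumSet (G : Type*) [AddCommGroup G] : 0 ∈ crossNumSet G := by
  simpa using (IsUFIMOn.empty (0 : ℕ → G)).sum_mem_crossNumSet

lemma add_mem_crossNumSet {r : ℕ} (hr : r.Prime) (hπ : Nat.card π.range = r) (hg : π g ≠ 0)
    (hord : addOrderOf (g - r • g) = addOrderOf g) {x : ℝ} (hx : x ∈ crossNumSet π.ker) :
    x + r / addOrderOf g ∈ crossNumSet G := by
  obtain ⟨ℓ, f, hf, rfl⟩ := hx
  subst hπ
  set r := Nat.card π.range
  have hb_sum : ∑ k ∈ range r, zeroSumBlock r g k = 0 := sum_zeroSumBlock hr.pos g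
  have hb_ord (k : ℕ) : addOrderOf (zeroSumBlock r g k) = addOrderOf g := by
    unfold zeroSumBlock
    split_ifs
    exacts [hord, rfl]
  have hb : IsUFIMOn (range r) (zeroSumBlock r g) :=
    .of_forall_eq_empty_or_eq (fun k _ h0 => hg (by rw [← map_zeroSumBlock k, h0, map_zero])) hb_sum
      fun J hJ h0 => eq_empty_or_eq_range_of_map_sum_zeroSumBlock hr hg hJ (by rw [h0, map_zero])
  have hmem := ((isUFIM_iff_isUFIMOn_univ.1 hf).disjSum hb fun J hJ h0 => by
    obtain rfl | rfl := eq_empty_or_eq_range_of_map_sum_zeroSumBlock hr hg hJ h0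
    exacts [sum_empty, hb_sum]).sum_mem_crossNumSet
  simp only [sum_disjSum, Sum.elim_inl, Sum.elim_inr, hb_ord, sum_const, card_range,
    AddSubgroup.addOrderOf_coe, nsmul_eq_mul, mul_one_div] at hmem
  exact hmem

universe u

lemma sum_mem_crossNumSet_of_card_eq_prime_pow {p : ℕ} (hp : p.Prime) (k : ℕ) {G : Type u}
    [AddCommGroup G] [IsAddCyclic G] (hG : Nat.card G = p ^ k) :
    ∑ j ∈ range k, (1 : ℝ) / p ^ j ∈ crossNumSet G := by
  induction k generalizing G with
  | zero => simpa using zero_mem_crossNumSet G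
  | succ k ih =>
    have hp0 := hp.pos
    have := Nat.finite_of_card_ne_zero (α := G) (by rw [hG]; positivity)
    have hr : Nat.card (nsmulAddMonoidHom (p ^ k) : G →+ G).range = p := natCard_range_nsmul hG
    obtain ⟨g, hg⟩ := IsAddCyclic.exists_ofOrder_eq_natCard (α := G)
    rw [hG] at hg
    have hgk : p ^ k • g ≠ 0 := nsmul_ne_zero_of_lt_addOrderOf (pow_ne_zero k hp.ne_zero)
      (hg ▸ Nat.pow_lt_pow_succ hp.one_lt)
    have hord : addOrderOf (g - p • g) = addOrderOf g := by
      rw [hg]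
      refine addOrderOf_eq_of_natCard_eq_prime_pow_succ hp hG ?_
      have h0 : p ^ k • p • g = 0 := by
        rw [← mul_nsmul', ← pow_succ, ← hg, addOrderOf_nsmul_eq_zero]
      rwa [nsmul_sub, h0, sub_zero]
    have hmem := add_mem_crossNumSet (π := (nsmulAddMonoidHom (p ^ k) : G →+ G)) hp hr hgk hord
      (ih (natCard_ker_nsmul hG))
    rw [sum_range_succ]
    convert hmem using 2
    rw [hg, Nat.cast_pow, pow_succ']
    field_simp

lemma sum_add_one_mem_crossNumSet {p q m : ℕ} (hp : p.Prime) (hq : q.Prime) (hpq : p ≠ q)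
    [IsAddCyclic G] (hG : Nat.card G = p ^ m * q) :
    ∑ k ∈ range m, (1 : ℝ) / p ^ k + 1 ∈ crossNumSet G := by
  have := Fact.mk hq
  have hp0 := hp.pos
  have hq0 := hq.pos
  have := Nat.finite_of_card_ne_zero (α := G) (by rw [hG]; positivity)
  have hr : Nat.card (nsmulAddMonoidHom (p ^ m) : G →+ G).range = q := natCard_range_nsmul hG
  obtain ⟨g, hg⟩ := exists_prime_addOrderOf_dvd_card' (G := G) q
    (hG ▸ dvd_mul_left q (p ^ m))
  have hgm : p ^ m • g ≠ 0 := fun h0 => hpq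
    ((Nat.prime_dvd_prime_iff_eq hq hp).1
      (hq.dvd_of_dvd_pow (hg ▸ addOrderOf_dvd_of_nsmul_eq_zero h0))).symm
  have hqg : q • g = 0 := hg ▸ addOrderOf_nsmul_eq_zero g
  have hmem := add_mem_crossNumSet (π := (nsmulAddMonoidHom (p ^ m) : G →+ G)) hq hr hgm
    (by rw [hqg, sub_zero])
    (sum_mem_crossNumSet_of_card_eq_prime_pow hp m (natCard_ker_nsmul hG))
  rwa [hg, div_self (by positivity)] at hmem

end LowerBound

theorem isGreatest_crossNumSet {p q m : ℕ} (hp : p.Prime) (hq : q.Prime) (hpq : p ≠ q)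
    {G : Type*} [AddCommGroup G] [IsAddCyclic G] (hG : Nat.card G = p ^ m * q) :
    IsGreatest (crossNumSet G) (∑ k ∈ range m, (1 : ℝ) / p ^ k + 1) := by
  refine ⟨sum_add_one_mem_crossNumSet hp hq hpq hG, ?_⟩
  rintro _ ⟨ℓ, g, hg, rfl⟩
  exact (isUFIM_iff_isUFIMOn_univ.1 hg).sum_one_div_addOrderOf_le hp hq hpq hG

lemma sum_one_div_pow_eq {K : Type*} [Field K] {x : K} (hx0 : x ≠ 0) (hx1 : x ≠ 1) {m : ℕ}
    (hm : 1 ≤ m) :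
    ∑ k ∈ range m, 1 / x ^ k = (x ^ m - 1) / (x ^ m - x ^ (m - 1)) := by
  obtain ⟨n, rfl⟩ := Nat.exists_eq_add_of_le' hm
  have hsub : x - 1 ≠ 0 := sub_ne_zero.2 hx1
  have hden : x ^ (n + 1) - x ^ n = x ^ n * (x - 1) := by ring
  simp only [one_div, ← inv_pow, geom_sum_inv hx1 hx0]
  rw [Nat.add_sub_cancel, hden, inv_pow]
  field_simp
  ring

/-- `K₁(C_{p^m} ⊕ C_q) = Σ_{k=1}^m 1/p^{k−1} + 1 = (p^m − 1)/(p^m − p^{m−1}) + 1`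
for distinct primes `p, q`. -/
theorem K1_pm_q (p q : ℕ) (hp : p.Prime) (hq : q.Prime) (hpq : p ≠ q)
    (m : ℕ) (hm : 1 ≤ m) :
    K1 (ZMod (p ^ m) × ZMod q) = (∑ k ∈ Finset.range m, (1 : ℝ) / (p : ℝ) ^ k) + 1 ∧
    K1 (ZMod (p ^ m) × ZMod q) =
      ((p : ℝ) ^ m - 1) / ((p : ℝ) ^ m - (p : ℝ) ^ (m - 1)) + 1 := by
  have hcop : (p ^ m).Coprime q := ((Nat.coprime_primes hp hq).2 hpq).pow_left m
  have hcyc : IsAddCyclic (ZMod (p ^ m) × ZMod q) :=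
    AddGroup.isAddCyclic_prod_iff.2 ⟨inferInstance, inferInstance, by simpa using hcop⟩
  have hcard : Nat.card (ZMod (p ^ m) × ZMod q) = p ^ m * q := by
    rw [Nat.card_prod, Nat.card_zmod, Nat.card_zmod]
  have hK1 : K1 (ZMod (p ^ m) × ZMod q) = ∑ k ∈ range m, (1 : ℝ) / p ^ k + 1 :=
    (isGreatest_crossNumSet hp hq hpq hcard).csSup_eq
  refine ⟨hK1, hK1.trans (congrArg (· + 1) (sum_one_div_pow_eq ?_ ?_ hm))⟩
  · exact_mod_cast hp.ne_zero
  · exact_mod_cast hp.ne_one
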